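/- Let σ ∈ Γ((1,1,1)), so that σ = (4n1, 4n2, 4n3) with nonnegative integers n_i; call the pair ((n1 − n3) mod 4, (n2 − n3) mod 4) the type of σ. If σ has type (m1', m2'), then R_1 σ has type ((1 − m1') mod 4, m2'), R_2 σ has type (m1', (1 − m2') mod 4), and R_3 σ has type ((−m2' − 1) mod 4, (−m1' − 1) mod 4). -/

import Mathlib

/-- The (normalized) Cartan matrix of the affine Lie algebra `B₂⁽¹⁾`. -/
noncomputable def cartanB2 : Matrix (Fin 3) (Fin 3) ℝ :=
  !![1, 0, -1; 0, 1, -1; -1/2, -1/2, 1]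

/-- The generator `R_i` (for the parameter `μ`) acting on `ℝ³`. -/
noncomputable def R (μ : Fin 3 → ℝ) (i : Fin 3) (σ : Fin 3 → ℝ) : Fin 3 → ℝ :=
  Function.update σ i (σ i + 4 * μ i - 2 * ∑ j, cartanB2 i j * σ j)

/-- Membership in `Γ(μ)`, the smallest subset of `ℝ³` containing `0` and closed under
the generators `R₁, R₂, R₃`. -/
inductive GammaMem (μ : Fin 3 → ℝ) : (Fin 3 → ℝ) → Prop
  | zero : GammaMem μ 0
  | step (i : Fin 3) {σ : Fin 3 → ℝ} : GammaMem μ σ → GammaMem μ (R μ i σ)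

/-- The type `((n₁ - n₃) mod 4, (n₂ - n₃) mod 4)` associated with `(n₁, n₂, n₃)`. -/
def tp (n : Fin 3 → ℕ) : ZMod 4 × ZMod 4 :=
  ((n 0 : ZMod 4) - (n 2 : ZMod 4), (n 1 : ZMod 4) - (n 2 : ZMod 4))

/-!
As the rows of the Cartan matrix sum to zero, each `R μ i` induces an affine map on the differences
`(σ₁ - σ₃, σ₂ - σ₃)`. These maps are built from additions and subtractions only, so they commute
with additive homomorphisms. The injective homomorphism `4 * · : ℤ → ℝ` therefore transports the
formula from `σ = 4n` to `n`, and the reduction `ℤ → ℤ/4` transports it to types.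
-/

/-- The differences `(v₁ - v₃, v₂ - v₃)`. With entries in `ZMod 4` they are the type of a point of
`Γ(1,1,1)`; other groups of coefficients serve to compute the action of `R` over `ℝ` and to descend
from there to `ℤ`. -/
def coordDiff {A : Type*} [Sub A] (v : Fin 3 → A) : A × A :=
  (v 0 - v 2, v 1 - v 2)

/-- The affine map by which the `i`-th generator acts on coordinate differences. The parameter `k`
is `4μ` for differences of the `σⱼ`, and `μ` for differences of the `nⱼ` where `σ = 4n`. -/
def diffReflection {A : Type*} [AddGroup A] (k : Fin 3 → A) (i : Fin 3) (p : A × A) : A × A :=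
  match i with
  | 0 => (k 0 - p.1, p.2)
  | 1 => (p.1, k 1 - p.2)
  | 2 => (-p.2 - k 2, -p.1 - k 2)

section AddMonoidHom

variable {A B : Type*} [AddGroup A] [AddGroup B] (f : A →+ B)

lemma coordDiff_comp (v : Fin 3 → A) : coordDiff (f ∘ v) = Prod.map f f (coordDiff v) := by
  simp [coordDiff]

lemma diffReflection_comp (k : Fin 3 → A) (i : Fin 3) (p : A × A) :
    diffReflection (f ∘ k) i (Prod.map f f p) = Prod.map f f (diffReflection k i p) := by
  fin_cases i <;> simp [diffReflection]

end AddMonoidHom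

lemma two_mul_sum_cartanB2 (σ : Fin 3 → ℝ) (i : Fin 3) :
    2 * ∑ j, cartanB2 i j * σ j =
      ![2 * (coordDiff σ).1, 2 * (coordDiff σ).2, -(coordDiff σ).1 - (coordDiff σ).2] i := by
  fin_cases i <;>
    simp only [Fin.sum_univ_three, Fin.zero_eta, Fin.mk_one, Fin.reduceFinMk, cartanB2,
      Matrix.of_apply, Matrix.cons_val, coordDiff] <;>
    ring

lemma coordDiff_R (μ σ : Fin 3 → ℝ) (i : Fin 3) :
    coordDiff (R μ i σ) = diffReflection (fun j ↦ 4 * μ j) i (coordDiff σ) := by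
  simp only [R, two_mul_sum_cartanB2]
  fin_cases i <;>
    simp only [Fin.zero_eta, Fin.mk_one, Fin.reduceFinMk, Matrix.cons_val] <;>
    grind [coordDiff, diffReflection]

lemma coordDiff_eq_of_R_eq {A : Type*} [AddGroup A] {f : A →+ ℝ} (hf : Function.Injective f)
    {μ σ : Fin 3 → ℝ} {k n n' : Fin 3 → A} {i : Fin 3} (hμ : ∀ j, 4 * μ j = f (k j))
    (hσ : ∀ j, σ j = f (n j)) (hR : ∀ j, R μ i σ j = f (n' j)) :
    coordDiff n' = diffReflection k i (coordDiff n) := by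
  apply hf.prodMap hf
  calc Prod.map f f (coordDiff n')
      = coordDiff (R μ i σ) := by rw [← coordDiff_comp, funext hR, Function.comp_def]
    _ = diffReflection (f ∘ k) i (coordDiff (f ∘ n)) := by
        rw [coordDiff_R, funext hμ, funext hσ, Function.comp_def, Function.comp_def]
    _ = Prod.map f f (diffReflection k i (coordDiff n)) := by
        rw [coordDiff_comp, diffReflection_comp]

theorem type_transformation_general {A : Type*} [AddGroupWithOne A] {μ σ : Fin 3 → ℝ}
    {k n n' : Fin 3 → ℤ} {i : Fin 3} (hμ : ∀ j, μ j = k j) (hσ : ∀ j, σ j = 4 * (n j : ℝ))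
    (hR : ∀ j, R μ i σ j = 4 * (n' j : ℝ)) :
    coordDiff (fun j ↦ (n' j : A)) =
      diffReflection (fun j ↦ (k j : A)) i (coordDiff fun j ↦ (n j : A)) := by
  let f : ℤ →+ ℝ := (AddMonoidHom.mulLeft 4).comp (Int.castAddHom ℝ)
  have hf : Function.Injective f := fun a b h ↦ by simpa [f] using h
  have over_int : coordDiff n' = diffReflection k i (coordDiff n) :=
    coordDiff_eq_of_R_eq hf (fun j ↦ congrArg (4 * ·) (hμ j)) hσ hR
  calc coordDiff (Int.castAddHom A ∘ n')
      = Prod.map (Int.castAddHom A) (Int.castAddHom A) (diffReflection k i (coordDiff n)) := by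
        rw [coordDiff_comp, over_int]
    _ = diffReflection (Int.castAddHom A ∘ k) i (coordDiff (Int.castAddHom A ∘ n)) := by
        rw [coordDiff_comp, diffReflection_comp]

/-- How the type of `σ ∈ Γ(1,1,1)` transforms under the generators `R₁, R₂, R₃`:
if `σ = (4n₁, 4n₂, 4n₃)` has type `(m₁', m₂')`, then `R₁σ` has type `(1 - m₁', m₂')`,
`R₂σ` has type `(m₁', 1 - m₂')` and `R₃σ` has type `(-m₂' - 1, -m₁' - 1)` (mod 4). -/
theorem type_transformation (σ : Fin 3 → ℝ) (hσ : GammaMem ![1, 1, 1] σ)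
    (n : Fin 3 → ℕ) (hn : ∀ i, σ i = 4 * (n i : ℝ)) :
    (∀ n' : Fin 3 → ℕ, (∀ j, R ![1, 1, 1] 0 σ j = 4 * (n' j : ℝ)) →
      tp n' = (1 - (tp n).1, (tp n).2)) ∧
    (∀ n' : Fin 3 → ℕ, (∀ j, R ![1, 1, 1] 1 σ j = 4 * (n' j : ℝ)) →
      tp n' = ((tp n).1, 1 - (tp n).2)) ∧
    (∀ n' : Fin 3 → ℕ, (∀ j, R ![1, 1, 1] 2 σ j = 4 * (n' j : ℝ)) →
      tp n' = (-(tp n).2 - 1, -(tp n).1 - 1)) := by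
  have transform (i : Fin 3) (n' : Fin 3 → ℕ) (hR : ∀ j, R ![1, 1, 1] i σ j = 4 * (n' j : ℝ)) :
      tp n' = diffReflection (fun _ ↦ 1) i (tp n) := by
    have h := type_transformation_general (A := ZMod 4) (μ := ![1, 1, 1]) (k := fun _ ↦ 1)
      (n := fun j ↦ n j) (n' := fun j ↦ n' j)
      (by simp [Fin.forall_fin_succ]) (by simpa using hn) (by simpa using hR)
    simpa [coordDiff, tp] using h
  exact ⟨transform 0, transform 1, transform 2⟩
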